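/- Let a ≥ 2, s ≥ 1, m > s be integers, let r be an integer with 0 ≤ r ≤ s and r ≡ m (mod 2), and let u = (u₁,…,uₙ) be a finite sequence of positive integers with uₙ ≥ 2 and ⟨u⟩ = a^{(m−r)/2}. Then: if r ≥ 1, both ⟨u₁,…,uₙ, a^r − 1, 1, uₙ − 1, uₙ₋₁,…,u₁⟩ = a^m and ⟨u₁,…,uₙ₋₁, uₙ − 1, 1, a^r − 1, uₙ,…,u₁⟩ = a^m; and if r = 0, both ⟨u₁,…,uₙ₋₁, uₙ + 1, uₙ − 1, uₙ₋₁,…,u₁⟩ = a^m and ⟨u₁,…,uₙ₋₁, uₙ − 1, uₙ + 1, uₙ₋₁,…,u₁⟩ = a^m. -/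

import Mathlib

/-- The continuant of a finite sequence of positive integers. -/
def continuant : List ℕ → ℕ
  | [] => 1
  | [a] => a
  | a :: b :: t => a * continuant (b :: t) + continuant t

/-!
Let `M u` be the product of the matrices `!![a, 1; 1, 0]` over the entries `a` of `u`; its top-left
entry is `⟨u⟩`. The factors are symmetric, so reversing `u` transposes `M u`, and `⟨v, w, vᴿ⟩` is
the value of the quadratic form of `M w` at the first row `(P, Q)` of `M v`. For
`w = (x + 1, b, 1, x)` the symmetric part of `M w` has rank one: the form is
`(b + 1) * ((x + 1) * P + Q) ^ 2 = (b + 1) * ⟨v, x + 1⟩ ^ 2`. A quadratic form does not see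
transposition, so `w` may be reversed. Finally, `⟨…, a, 0, b, …⟩ = ⟨…, a + b, …⟩`, so that
`r = 0` is the case `b = a ^ r - 1 = 0`.
-/

open Matrix

/-- The continuant matrix of a list: the product of the elementary matrices `!![a, 1; 1, 0]` over
its entries `a`, in order. Its first row consists of the continuants of the list and of the list
without its last entry (`0` for the empty list). -/
def continuantMatrix {R : Type*} [Semiring R] (u : List R) : Matrix (Fin 2) (Fin 2) R :=
  (u.map fun a ↦ !![a, 1; 1, 0]).prod

section continuantMatrix

variable {R : Type*}

@[simp]
theorem continuantMatrix_nil [Semiring R] : continuantMatrix ([] : List R) = 1 := rfl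

@[simp]
theorem continuantMatrix_cons [Semiring R] (a : R) (u : List R) :
    continuantMatrix (a :: u) = !![a, 1; 1, 0] * continuantMatrix u := by
  simp [continuantMatrix]

@[simp]
theorem continuantMatrix_append [Semiring R] (u v : List R) :
    continuantMatrix (u ++ v) = continuantMatrix u * continuantMatrix v := by
  simp [continuantMatrix]

@[simp]
theorem continuantMatrix_reverse [CommSemiring R] (u : List R) :
    continuantMatrix u.reverse = (continuantMatrix u)ᵀ := by
  have elementary_symm (a : R) : !![a, 1; 1, 0]ᵀ = !![a, 1; 1, 0] := by
    simp [← Matrix.ext_iff, Fin.forall_fin_two]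
  simp [continuantMatrix, transpose_list_prod, Function.comp_def, elementary_symm]

theorem continuantMatrix_cons_zero_cons [Semiring R] (a b : R) (u : List R) :
    continuantMatrix (a :: 0 :: b :: u) = continuantMatrix ((a + b) :: u) := by
  have contract : !![a, 1; 1, 0] * !![0, 1; 1, 0] * !![b, 1; 1, 0] = !![a + b, 1; 1, 0] := by
    simp [add_comm]
  simp only [continuantMatrix_cons, ← contract, Matrix.mul_assoc]

theorem continuantMatrix_folding [CommSemiring R] (x b : R) :
    continuantMatrix [x + 1, b, 1, x] =
      !![(b + 1) * (x + 1) ^ 2, (b + 1) * (x + 1) + 1; b * (x + 1) + x, b + 1] := by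
  simp only [continuantMatrix_cons, continuantMatrix_nil, mul_fin_two, mul_one]
  ring_nf

theorem continuantMatrix_append_append_reverse_apply [CommSemiring R] (v w : List R)
    (i j : Fin 2) :
    continuantMatrix (v ++ w ++ v.reverse) i j =
      continuantMatrix v i ⬝ᵥ continuantMatrix w *ᵥ continuantMatrix v j := by
  rw [continuantMatrix_append, continuantMatrix_append, continuantMatrix_reverse,
    mul_mul_apply, transpose_transpose]

end continuantMatrix

theorem continuant_eq_continuantMatrix_apply (u : List ℕ) :
    continuant u = continuantMatrix u 0 0 := by
  induction u using continuant.induct with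
  | case1 => simp [continuant]
  | case2 a => simp [continuant]
  | case3 a b t ih_tail ih_drop =>
    simp only [continuant, ih_tail, ih_drop, continuantMatrix_cons, mul_apply, Fin.sum_univ_two]
    simp

theorem continuant_append_reverse_append_reverse (v w : List ℕ) :
    continuant (v ++ w.reverse ++ v.reverse) = continuant (v ++ w ++ v.reverse) := by
  simp only [continuant_eq_continuantMatrix_apply, continuantMatrix_append_append_reverse_apply,
    continuantMatrix_reverse]
  rw [mulVec_transpose, dotProduct_comm, dotProduct_mulVec]

theorem continuant_append_cons_zero_cons (v : List ℕ) (a b : ℕ) (w : List ℕ) :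
    continuant (v ++ a :: 0 :: b :: w) = continuant (v ++ (a + b) :: w) := by
  rw [continuant_eq_continuantMatrix_apply, continuantMatrix_append,
    continuantMatrix_cons_zero_cons, ← continuantMatrix_append,
    ← continuant_eq_continuantMatrix_apply]

theorem continuant_folding (v : List ℕ) (x b : ℕ) :
    continuant (v ++ [x + 1, b, 1, x] ++ v.reverse) = (b + 1) * continuant (v ++ [x + 1]) ^ 2 := by
  have last_entry :
      continuant (v ++ [x + 1]) = (x + 1) * continuantMatrix v 0 0 + continuantMatrix v 0 1 := by
    simp [continuant_eq_continuantMatrix_apply, mul_apply, mul_comm]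
  rw [last_entry, continuant_eq_continuantMatrix_apply,
    continuantMatrix_append_append_reverse_apply, continuantMatrix_folding]
  simp only [dotProduct, mulVec, Fin.sum_univ_two, of_apply, cons_val_zero, cons_val_one]
  ring

theorem continuant_folding_sq (v : List ℕ) (x : ℕ) :
    continuant (v ++ [x + 2, x] ++ v.reverse) = continuant (v ++ [x + 1]) ^ 2 := by
  calc continuant (v ++ [x + 2, x] ++ v.reverse)
      = continuant (v ++ [x + 1, 0, 1, x] ++ v.reverse) := by
        simp [continuant_append_cons_zero_cons]
    _ = continuant (v ++ [x + 1]) ^ 2 := by rw [continuant_folding, zero_add, one_mul]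

theorem lemma2_construction (a s m r : ℕ) (ha : 2 ≤ a) (hs : 1 ≤ s) (hm : s < m)
    (hrs : r ≤ s) (hpar : r % 2 = m % 2)
    (v : List ℕ) (x : ℕ) (hx : 2 ≤ x) (hpos : ∀ y ∈ v ++ [x], 0 < y)
    (hcont : continuant (v ++ [x]) = a ^ ((m - r) / 2)) :
    (1 ≤ r →
      continuant ((v ++ [x]) ++ [a ^ r - 1, 1, x - 1] ++ v.reverse) = a ^ m ∧
      continuant (v ++ [x - 1, 1, a ^ r - 1] ++ (v ++ [x]).reverse) = a ^ m) ∧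
    (r = 0 →
      continuant (v ++ [x + 1, x - 1] ++ v.reverse) = a ^ m ∧
      continuant (v ++ [x - 1, x + 1] ++ v.reverse) = a ^ m) := by
  obtain ⟨z, rfl⟩ : ∃ z, x = z + 1 := ⟨x - 1, by omega⟩
  have hpow : a ^ r * continuant (v ++ [z + 1]) ^ 2 = a ^ m := by
    rw [hcont, ← pow_mul, ← pow_add, Nat.div_mul_cancel (by omega), Nat.add_sub_cancel' (by omega)]
  constructor
  · intro _
    have folded : continuant (v ++ [z + 1, a ^ r - 1, 1, z] ++ v.reverse) = a ^ m := by
      rw [continuant_folding, Nat.sub_add_cancel (Nat.pow_pos (by omega)), hpow]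
    have reversed := (continuant_append_reverse_append_reverse v _).trans folded
    exact ⟨by simpa using folded, by simpa using reversed⟩
  · rintro rfl
    have folded : continuant (v ++ [z + 2, z] ++ v.reverse) = a ^ m := by
      rw [continuant_folding_sq, ← hpow, pow_zero, one_mul]
    exact ⟨folded, (continuant_append_reverse_append_reverse v _).trans folded⟩
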